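/- In any nondegenerate triangle, the distance from the Gergonne point X7 to the incenter X1 satisfies dist(X7, X1) ≤ (2/17)·(5 − 2√2)·dist(X7, X3), where X3 is the circumcenter. -/

import Mathlib

/-- The point with normalized barycentric coordinates `(x : y : z)`
with respect to the triangle `A B C`. -/
noncomputable def bary (A B C : EuclideanSpace ℝ (Fin 2)) (x y z : ℝ) :
    EuclideanSpace ℝ (Fin 2) :=
  (x + y + z)⁻¹ • (x • A + y • B + z • C)

/-- The triangle center with barycentric coordinates
`(f a b c : f b c a : f c a b)` where `a, b, c` are the side lengths. -/
noncomputable def tcenter (f : ℝ → ℝ → ℝ → ℝ) (A B C : EuclideanSpace ℝ (Fin 2)) :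
    EuclideanSpace ℝ (Fin 2) :=
  bary A B C (f (dist B C) (dist C A) (dist A B))
    (f (dist C A) (dist A B) (dist B C))
    (f (dist A B) (dist B C) (dist C A))

/-!
Write `a = y + z`, `b = z + x`, `c = x + y` with tangent lengths `x, y, z > 0`, and let `s`, `R`,
`r` be the semiperimeter, circumradius and inradius. The squared distances are
`X₇X₁² = r² ((4R + r)² - 3s²) / (4R + r)²` and
`X₇X₃² = (R² (4R + r)² - 4s² r (R + r)) / (4R + r)²`,
so the claim is affine in `s²` and it is enough to check it at the ends of an interval containing
`s²`. The upper end comes from `3s² ≤ (4R + r)²`. The lower end comes from Blundon's inequality and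
is attained by isosceles triangles; with `d² = R (R - 2r)` it reduces to `2r ≤ k (3R - d + 2r)`,
which is a quadratic inequality in `d / R`. The constant of the theorem is the smaller root of the
discriminant `17k² - 20k + 4` of this quadratic.
-/

section Algebra

variable {K : Type*} [Field K] [LinearOrder K] [IsStrictOrderedRing K] {k R r d t : K}

theorem add_mul_nonneg_of_mem_Icc {α β lo hi : K} (ht : t ∈ Set.Icc lo hi)
    (hlo : 0 ≤ α + β * lo) (hhi : 0 ≤ α + β * hi) : 0 ≤ α + β * t := by
  rcases le_total 0 β with hβ | hβ
  · linarith [mul_le_mul_of_nonneg_left ht.1 hβ]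
  · linarith [mul_le_mul_of_nonpos_left ht.2 hβ]

theorem two_mul_le_mul_three_mul_sub_add (hk : 17 * k ^ 2 - 20 * k + 4 ≤ 0) (hR : 0 < R)
    (hd : d ^ 2 = R * (R - 2 * r)) : 2 * r ≤ k * (3 * R - d + 2 * r) := by
  have hk1 : 0 < 1 - k := by nlinarith [sq_nonneg (k - 1)]
  have complete_square : 4 * (1 - k) * R * (k * (3 * R - d + 2 * r) - 2 * r) =
      (2 * (1 - k) * d - k * R) ^ 2 - (17 * k ^ 2 - 20 * k + 4) * R ^ 2 := by
    linear_combination -4 * (1 - k) ^ 2 * hd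
  have h : 0 ≤ 4 * (1 - k) * R * (k * (3 * R - d + 2 * r) - 2 * r) := by
    rw [complete_square]
    nlinarith [sq_nonneg (2 * (1 - k) * d - k * R), sq_nonneg R]
  exact sub_nonneg.1 (nonneg_of_mul_nonneg_right h (by positivity))

theorem isosceles_gergonne_inequality (hk : 17 * k ^ 2 - 20 * k + 4 ≤ 0) (hr : 0 < r)
    (hRr : 2 * r ≤ R) (hd : d ^ 2 = R * (R - 2 * r))
    (ht : t = 2 * R ^ 2 + 10 * R * r - r ^ 2 - 2 * (R - 2 * r) * d) :
    r ^ 2 * ((4 * R + r) ^ 2 - 3 * t) ≤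
      k ^ 2 * (R ^ 2 * (4 * R + r) ^ 2 - 4 * t * r * (R + r)) := by
  have hR : 0 < R := by linarith
  have hsq : (2 * r) ^ 2 ≤ (k * (3 * R - d + 2 * r)) ^ 2 :=
    pow_le_pow_left₀ (by positivity) (two_mul_le_mul_three_mul_sub_add hk hR hd) 2
  have factorization : 4 * R * (k ^ 2 * (R ^ 2 * (4 * R + r) ^ 2 - 4 * t * r * (R + r)) -
      r ^ 2 * ((4 * R + r) ^ 2 - 3 * t)) =
      (R - 2 * r) * (3 * R + d) ^ 2 * ((k * (3 * R - d + 2 * r)) ^ 2 - (2 * r) ^ 2) := by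
    have hr_eq : r = (R ^ 2 - d ^ 2) / (2 * R) := by
      field_simp
      linear_combination hd
    rw [ht, hr_eq]
    field_simp
    ring
  have h : 0 ≤ 4 * R * (k ^ 2 * (R ^ 2 * (4 * R + r) ^ 2 - 4 * t * r * (R + r)) -
      r ^ 2 * ((4 * R + r) ^ 2 - 3 * t)) := by
    rw [factorization]
    exact mul_nonneg (mul_nonneg (by linarith) (sq_nonneg _)) (by linarith)
  exact sub_nonneg.1 (nonneg_of_mul_nonneg_right h (by positivity))

/-- For a triangle, the hypotheses on `t = s²` are Blundon's inequality and `√3 s ≤ 4R + r`. -/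
theorem gergonne_inequality_of_blundon {k R r t : ℝ} (hk : 17 * k ^ 2 - 20 * k + 4 ≤ 0)
    (hr : 0 < r) (hRr : 2 * r ≤ R)
    (hlo : (t - (2 * R ^ 2 + 10 * R * r - r ^ 2)) ^ 2 ≤ 4 * R * (R - 2 * r) ^ 3)
    (hhi : 3 * t ≤ (4 * R + r) ^ 2) :
    r ^ 2 * ((4 * R + r) ^ 2 - 3 * t) ≤
      k ^ 2 * (R ^ 2 * (4 * R + r) ^ 2 - 4 * t * r * (R + r)) := by
  have : 0 ≤ R - 2 * r := by linarith
  have hR : 0 < R := by linarith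
  obtain ⟨d, hd0, hd⟩ : ∃ d : ℝ, 0 ≤ d ∧ d ^ 2 = R * (R - 2 * r) :=
    ⟨√(R * (R - 2 * r)), Real.sqrt_nonneg _, Real.sq_sqrt (by positivity)⟩
  have ht : t ∈ Set.Icc (2 * R ^ 2 + 10 * R * r - r ^ 2 - 2 * (R - 2 * r) * d)
      ((4 * R + r) ^ 2 / 3) := by
    have hsq : (t - (2 * R ^ 2 + 10 * R * r - r ^ 2)) ^ 2 ≤ (2 * (R - 2 * r) * d) ^ 2 := by
      linear_combination hlo - 4 * (R - 2 * r) ^ 2 * hd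
    constructor
    · linarith [(abs_le_of_sq_le_sq' hsq (by positivity)).1]
    · linarith
  have lower := isosceles_gergonne_inequality hk hr hRr hd rfl
  have upper : 0 ≤ k ^ 2 * (4 * R + r) ^ 2 * ((R - 2 * r) * (R + 2 / 3 * r)) := by positivity
  have h := add_mul_nonneg_of_mem_Icc (α := (k ^ 2 * R ^ 2 - r ^ 2) * (4 * R + r) ^ 2)
    (β := 3 * r ^ 2 - 4 * k ^ 2 * r * (R + r)) ht (by linarith) (by linarith)
  linarith

end Algebra

section TangentLengths

/-- The inradius of the triangle with side lengths `y + z`, `z + x`, `x + y`, by Heron's formula. -/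
noncomputable def inradius (x y z : ℝ) : ℝ :=
  √(x * y * z / (x + y + z))

/-- The circumradius of the triangle with side lengths `y + z`, `z + x`, `x + y`, as the product
of the sides over four times the area. -/
noncomputable def circumradius (x y z : ℝ) : ℝ :=
  (x + y) * (y + z) * (z + x) / (4 * (x + y + z) * inradius x y z)

variable {x y z : ℝ}

theorem inradius_pos (hx : 0 < x) (hy : 0 < y) (hz : 0 < z) : 0 < inradius x y z :=
  Real.sqrt_pos.2 (by positivity)

theorem inradius_sq (hx : 0 < x) (hy : 0 < y) (hz : 0 < z) :
    inradius x y z ^ 2 = x * y * z / (x + y + z) :=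
  Real.sq_sqrt (by positivity)

theorem prod_eq_inradius_sq_mul (hx : 0 < x) (hy : 0 < y) (hz : 0 < z) :
    x * y * z = inradius x y z ^ 2 * (x + y + z) := by
  rw [inradius_sq hx hy hz]
  field_simp

theorem sum_mul_eq_inradius_mul (hx : 0 < x) (hy : 0 < y) (hz : 0 < z) :
    x * y + y * z + z * x =
      inradius x y z * (4 * circumradius x y z + inradius x y z) := by
  have hr := inradius_pos hx hy hz
  have hprod := prod_eq_inradius_sq_mul hx hy hz
  unfold circumradius
  field_simp
  linear_combination hprod

theorem four_mul_circumradius_add_inradius_eq (hx : 0 < x) (hy : 0 < y) (hz : 0 < z) :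
    4 * circumradius x y z + inradius x y z = (x * y + y * z + z * x) / inradius x y z := by
  rw [sum_mul_eq_inradius_mul hx hy hz, mul_div_cancel_left₀ _ (inradius_pos hx hy hz).ne']

theorem circumradius_sq (hx : 0 < x) (hy : 0 < y) (hz : 0 < z) :
    circumradius x y z ^ 2 =
      ((x + y) * (y + z) * (z + x)) ^ 2 / (16 * (x + y + z) * (x * y * z)) := by
  rw [circumradius, div_pow, mul_pow _ (inradius x y z), inradius_sq hx hy hz]
  field_simp
  ring

theorem two_mul_inradius_le_circumradius (hx : 0 < x) (hy : 0 < y) (hz : 0 < z) :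
    2 * inradius x y z ≤ circumradius x y z := by
  have hr := inradius_pos hx hy hz
  have hprod := prod_eq_inradius_sq_mul hx hy hz
  have hsum := sum_mul_eq_inradius_mul hx hy hz
  set r := inradius x y z
  set R := circumradius x y z
  have sum_sq : 4 * (x + y + z) * r * (R - 2 * r) =
      x * (y - z) ^ 2 + y * (z - x) ^ 2 + z * (x - y) ^ 2 := by
    linear_combination 9 * hprod - (x + y + z) * hsum
  have h : 0 ≤ 4 * (x + y + z) * r * (R - 2 * r) := sum_sq ▸ by positivity
  exact sub_nonneg.1 (nonneg_of_mul_nonneg_right h (by positivity))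

theorem three_mul_semiperimeter_sq_le (hx : 0 < x) (hy : 0 < y) (hz : 0 < z) :
    3 * (x + y + z) ^ 2 ≤ (4 * circumradius x y z + inradius x y z) ^ 2 := by
  have hr := inradius_pos hx hy hz
  have hprod := prod_eq_inradius_sq_mul hx hy hz
  have hsum := sum_mul_eq_inradius_mul hx hy hz
  refine le_of_mul_le_mul_left ?_ (pow_pos hr 2)
  calc inradius x y z ^ 2 * (3 * (x + y + z) ^ 2)
      = 3 * (x + y + z) * (x * y * z) := by rw [hprod]; ring
    _ ≤ (x * y + y * z + z * x) ^ 2 := by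
      linarith [sq_nonneg (x * y - y * z), sq_nonneg (y * z - z * x), sq_nonneg (z * x - x * y)]
    _ = _ := by rw [hsum]; ring

theorem blundon_inequality (hx : 0 < x) (hy : 0 < y) (hz : 0 < z) :
    ((x + y + z) ^ 2 - (2 * circumradius x y z ^ 2 +
      10 * circumradius x y z * inradius x y z - inradius x y z ^ 2)) ^ 2 ≤
      4 * circumradius x y z * (circumradius x y z - 2 * inradius x y z) ^ 3 := by
  have hr := inradius_pos hx hy hz
  have hprod := prod_eq_inradius_sq_mul hx hy hz
  have hsum := sum_mul_eq_inradius_mul hx hy hz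
  set r := inradius x y z
  set R := circumradius x y z
  have discriminant : 4 * r ^ 2 * (4 * R * (R - 2 * r) ^ 3 -
      ((x + y + z) ^ 2 - (2 * R ^ 2 + 10 * R * r - r ^ 2)) ^ 2) =
      ((x - y) * (y - z) * (z - x)) ^ 2 := by
    -- the discriminant of `(T - x) (T - y) (T - z)` in terms of its coefficients
    calc _ = (x + y + z) ^ 2 * (r * (4 * R + r)) ^ 2 - 4 * (r * (4 * R + r)) ^ 3 -
          4 * (x + y + z) ^ 3 * (r ^ 2 * (x + y + z)) +
          18 * (x + y + z) * (r * (4 * R + r)) * (r ^ 2 * (x + y + z)) -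
          27 * (r ^ 2 * (x + y + z)) ^ 2 := by ring
      _ = _ := by rw [← hsum, ← hprod]; ring
  have h : 0 ≤ 4 * r ^ 2 * (4 * R * (R - 2 * r) ^ 3 -
      ((x + y + z) ^ 2 - (2 * R ^ 2 + 10 * R * r - r ^ 2)) ^ 2) := discriminant ▸ sq_nonneg _
  exact sub_nonneg.1 (nonneg_of_mul_nonneg_right h (by positivity))

end TangentLengths

section RaviSubstitution

variable {V P : Type*} [NormedAddCommGroup V] [NormedSpace ℝ V] [StrictConvexSpace ℝ V]
  [MetricSpace P] [NormedAddTorsor V P] {A B C : P}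

theorem dist_lt_dist_add_dist_of_affineIndependent
    (h : AffineIndependent ℝ ![A, B, C]) :
    dist A C < dist A B + dist B C := by
  rw [affineIndependent_iff_not_collinear_set] at h
  exact dist_lt_dist_add_dist_iff.2 fun hB => h hB.collinear

theorem exists_tangent_lengths (h : AffineIndependent ℝ ![A, B, C]) :
    ∃ x y z : ℝ, 0 < x ∧ 0 < y ∧ 0 < z ∧
      dist B C = y + z ∧ dist C A = z + x ∧ dist A B = x + y := by
  have hb := dist_lt_dist_add_dist_of_affineIndependent h
  have hc := dist_lt_dist_add_dist_of_affineIndependent h.comm_right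
  have ha := dist_lt_dist_add_dist_of_affineIndependent h.comm_left
  rw [dist_comm A C] at hb hc
  rw [dist_comm C B] at hc
  rw [dist_comm B A, dist_comm A C] at ha
  refine ⟨(dist C A + dist A B - dist B C) / 2, (dist A B + dist B C - dist C A) / 2,
    (dist B C + dist C A - dist A B) / 2, ?_, ?_, ?_, ?_, ?_, ?_⟩ <;> linarith

end RaviSubstitution

section Barycentric

variable {A B C : EuclideanSpace ℝ (Fin 2)} {x y z : ℝ}

theorem norm_sq_smul_add_smul_add_smul {V : Type*} [NormedAddCommGroup V] [InnerProductSpace ℝ V]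
    (P Q S : V) {u v w : ℝ} (h : u + v + w = 0) :
    ‖u • P + v • Q + w • S‖ ^ 2 =
      -(dist Q S ^ 2 * (v * w) + dist S P ^ 2 * (w * u) + dist P Q ^ 2 * (u * v)) := by
  have hsum : ∑ i, ![u, v, w] i = 0 := by simpa [Fin.sum_univ_three] using h
  have inner_self := inner_sum_smul_sum_smul_of_sum_eq_zero ![P, Q, S] hsum ![P, Q, S] hsum
  rw [real_inner_self_eq_norm_sq] at inner_self
  simp only [Fin.sum_univ_three, Matrix.cons_val, ← dist_eq_norm, dist_self, dist_comm Q P,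
    dist_comm S Q, dist_comm P S] at inner_self
  rw [inner_self]
  ring

theorem dist_bary_sq {x' y' z' : ℝ} (h : x + y + z ≠ 0) (h' : x' + y' + z' ≠ 0) :
    dist (bary A B C x y z) (bary A B C x' y' z') ^ 2 =
      -(dist B C ^ 2 * ((y / (x + y + z) - y' / (x' + y' + z')) *
          (z / (x + y + z) - z' / (x' + y' + z'))) +
        dist C A ^ 2 * ((z / (x + y + z) - z' / (x' + y' + z')) *
          (x / (x + y + z) - x' / (x' + y' + z'))) +
        dist A B ^ 2 * ((x / (x + y + z) - x' / (x' + y' + z')) *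
          (y / (x + y + z) - y' / (x' + y' + z')))) := by
  rw [← norm_sq_smul_add_smul_add_smul A B C (by field_simp; ring), dist_eq_norm]
  congr 2
  simp only [bary, div_eq_inv_mul]
  module

theorem bary_mul_left {m : ℝ} (hm : m ≠ 0) :
    bary A B C (m * x) (m * y) (m * z) = bary A B C x y z := by
  simp only [bary, ← mul_add, mul_smul, ← smul_add, mul_inv]
  rw [smul_comm m⁻¹, inv_smul_smul₀ hm]

end Barycentric

section Triangle

/-- The incenter `X₁`. -/
noncomputable def incenter (A B C : EuclideanSpace ℝ (Fin 2)) : EuclideanSpace ℝ (Fin 2) :=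
  tcenter (fun a _ _ => a) A B C

/-- The circumcenter `X₃`. -/
noncomputable def circumcenter (A B C : EuclideanSpace ℝ (Fin 2)) : EuclideanSpace ℝ (Fin 2) :=
  tcenter (fun a b c => a ^ 2 * (a ^ 2 - b ^ 2 - c ^ 2)) A B C

/-- The Gergonne point `X₇`. -/
noncomputable def gergonnePoint (A B C : EuclideanSpace ℝ (Fin 2)) : EuclideanSpace ℝ (Fin 2) :=
  tcenter (fun a b c => (a + b - c) * (a - b + c)) A B C

variable {A B C : EuclideanSpace ℝ (Fin 2)} {x y z : ℝ}

theorem incenter_eq_bary (ha : dist B C = y + z) (hb : dist C A = z + x) (hc : dist A B = x + y) :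
    incenter A B C = bary A B C (y + z) (z + x) (x + y) := by
  rw [incenter, tcenter, ha, hb, hc]

theorem circumcenter_eq_bary
    (ha : dist B C = y + z) (hb : dist C A = z + x) (hc : dist A B = x + y) :
    circumcenter A B C = bary A B C ((y + z) ^ 2 * (x * (x + y + z) - y * z))
      ((z + x) ^ 2 * (y * (x + y + z) - z * x)) ((x + y) ^ 2 * (z * (x + y + z) - x * y)) := by
  rw [circumcenter, tcenter, ha, hb, hc,
    ← bary_mul_left (m := -2) (x := (y + z) ^ 2 * (x * (x + y + z) - y * z)) (by norm_num)]
  congr 1 <;> ring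

theorem gergonnePoint_eq_bary
    (ha : dist B C = y + z) (hb : dist C A = z + x) (hc : dist A B = x + y) :
    gergonnePoint A B C = bary A B C (y * z) (z * x) (x * y) := by
  rw [gergonnePoint, tcenter, ha, hb, hc,
    ← bary_mul_left (m := 4) (x := y * z) (by norm_num)]
  congr 1 <;> ring

theorem dist_gergonnePoint_incenter_sq (hx : 0 < x) (hy : 0 < y) (hz : 0 < z)
    (ha : dist B C = y + z) (hb : dist C A = z + x) (hc : dist A B = x + y) :
    dist (gergonnePoint A B C) (incenter A B C) ^ 2 =
      inradius x y z ^ 2 *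
        ((4 * circumradius x y z + inradius x y z) ^ 2 - 3 * (x + y + z) ^ 2) /
        (4 * circumradius x y z + inradius x y z) ^ 2 := by
  have := inradius_pos hx hy hz
  have hr2 := inradius_sq hx hy hz
  rw [gergonnePoint_eq_bary ha hb hc, incenter_eq_bary ha hb hc,
    dist_bary_sq (by positivity) (by positivity), ha, hb, hc,
    four_mul_circumradius_add_inradius_eq hx hy hz, div_pow, hr2]
  field_simp
  ring

theorem dist_gergonnePoint_circumcenter_sq (hx : 0 < x) (hy : 0 < y) (hz : 0 < z)
    (ha : dist B C = y + z) (hb : dist C A = z + x) (hc : dist A B = x + y) :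
    dist (gergonnePoint A B C) (circumcenter A B C) ^ 2 =
      (circumradius x y z ^ 2 * (4 * circumradius x y z + inradius x y z) ^ 2 -
        4 * (x + y + z) ^ 2 * inradius x y z * (circumradius x y z + inradius x y z)) /
        (4 * circumradius x y z + inradius x y z) ^ 2 := by
  have := inradius_pos hx hy hz
  have hr2 := inradius_sq hx hy hz
  have inradius_mul_add : inradius x y z * (circumradius x y z + inradius x y z) =
      (x * y + y * z + z * x + 3 * (x * y * z / (x + y + z))) / 4 := by
    linear_combination 3 / 4 * hr2 - sum_mul_eq_inradius_mul hx hy hz / 4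
  have weights_sum : (y + z) ^ 2 * (x * (x + y + z) - y * z) +
      (z + x) ^ 2 * (y * (x + y + z) - z * x) + (x + y) ^ 2 * (z * (x + y + z) - x * y) =
      8 * (x + y + z) * (x * y * z) := by ring
  rw [gergonnePoint_eq_bary ha hb hc, circumcenter_eq_bary ha hb hc, dist_bary_sq (by positivity)
    (by rw [weights_sum]; positivity), weights_sum, ha, hb, hc, mul_assoc _ (inradius x y z),
    inradius_mul_add, circumradius_sq hx hy hz, four_mul_circumradius_add_inradius_eq hx hy hz,
    div_pow, hr2]
  field_simp
  ring

end Triangle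

theorem stmt_18 (A B C : EuclideanSpace ℝ (Fin 2))
    (h : AffineIndependent ℝ ![A, B, C]) :
    dist (tcenter (fun a b c => (a + b - c)*(a - b + c)) A B C) (tcenter (fun a b c => a) A B C) ≤ (2/17) * (5 - 2 * Real.sqrt 2) * dist (tcenter (fun a b c => (a + b - c)*(a - b + c)) A B C) (tcenter (fun a b c => a^2*(a^2 - b^2 - c^2)) A B C) := by
  change dist (gergonnePoint A B C) (incenter A B C) ≤
    2 / 17 * (5 - 2 * √2) * dist (gergonnePoint A B C) (circumcenter A B C)
  set k : ℝ := 2 / 17 * (5 - 2 * √2) with k_def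
  have hk : 17 * k ^ 2 - 20 * k + 4 = 0 := by
    rw [k_def]
    linear_combination 16 / 17 * Real.sq_sqrt (zero_le_two (α := ℝ))
  have hk0 : 0 ≤ k := by nlinarith [sq_nonneg k]
  obtain ⟨x, y, z, hx, hy, hz, ha, hb, hc⟩ := exists_tangent_lengths h
  refine le_of_sq_le_sq ?_ (mul_nonneg hk0 dist_nonneg)
  rw [mul_pow, dist_gergonnePoint_incenter_sq hx hy hz ha hb hc,
    dist_gergonnePoint_circumcenter_sq hx hy hz ha hb hc, ← mul_div_assoc]
  refine div_le_div_of_nonneg_right ?_ (sq_nonneg _)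
  exact gergonne_inequality_of_blundon hk.le (inradius_pos hx hy hz)
    (two_mul_inradius_le_circumradius hx hy hz) (blundon_inequality hx hy hz)
    (three_mul_semiperimeter_sq_le hx hy hz)
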